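/- GMLC ≡ GNN_b^ACR and ML(E) ≡ GNN_s^ACR: every GMLC (resp. ML(E)) logic classifier has an equivalent GNN classifier in GNN_b^ACR (resp. GNN_s^ACR), and conversely every GNN classifier in GNN_b^ACR (resp. GNN_s^ACR) has an equivalent GMLC (resp. ML(E)) logic classifier. -/

import Mathlib

/-!
Formulas to networks. Let `k` be the counting rank of `φ` and `L` its modal depth. Since there are
only continuum many finite multisets of real vectors, one real number can injectively encode the
old label of a node together with the multisets of its neighbour labels and of all labels, with
multiplicities capped at `k`. The network `refGNN` computes this code in each of its `L` layers.
Capped multisets determine every count up to `k`, so by induction on formulas (`refGNN_sat_iff`)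
nodes with equal labels after `ℓ` layers agree on all formulas of depth at most `ℓ` and rank at
most `k`. Hence a classification function that accepts exactly the labels realised by models of
`φ` computes `φ`. For ML(E) the rank is at most `1`, so all functions are set-based.

Networks to formulas. After each layer the labels take finitely many values, and each value is
definable by a formula (`finDef_labelAt`). Indeed, the new label is a function of the old one and
of two capped multisets, and a multiset over a finite set of definable values capped at `k` is
determined by finitely many multiplicities between `0` and `k`, each expressible by the modalities
with grades `1, …, k` (`FinDef.capAt`). A 1-bounded network thus needs only grade `1`.
-/

attribute [local instance] Classical.propDecidable

noncomputable section

/-! ## Multisets with capped multiplicities, and bounded aggregation functions -/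

/-- The multiset obtained from `M` by replacing every multiplicity greater than `k` by `k`. -/
def Multiset.capAt {α : Type*} (k : ℕ) (M : Multiset α) : Multiset α :=
  haveI := Classical.decEq α
  M.toFinset.val.bind fun a => Multiset.replicate (min (M.count a) k) a

/-- A function on multisets is `k`-bounded if its value on any multiset agrees with its value
on the multiset with all multiplicities capped at `k`. -/
def KBounded {α β : Type*} (k : ℕ) (f : Multiset α → β) : Prop :=
  ∀ M : Multiset α, f M = f (M.capAt k)

/-- A function on multisets is bounded if it is `k`-bounded for some `k`;
it is set-based if it is `1`-bounded. -/
def BoundedAgg {α β : Type*} (f : Multiset α → β) : Prop :=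
  ∃ k : ℕ, KBounded k f

/-! ## Finite undirected simple node-labelled graphs -/

structure LGraph (d : ℕ) where
  n : ℕ
  adj : Fin n → Fin n → Prop
  symm : ∀ u v, adj u v → adj v u
  irrefl : ∀ v, ¬ adj v v
  label : Fin n → Fin d → Bool

/-- The neighbours of a node. -/
def LGraph.nbrs {d : ℕ} (G : LGraph d) (v : Fin G.n) : Finset (Fin G.n) :=
  Finset.univ.filter fun w => G.adj v w

/-- The non-neighbours of a node (excluding the node itself). -/
def LGraph.conbrs {d : ℕ} (G : LGraph d) (v : Fin G.n) : Finset (Fin G.n) :=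
  Finset.univ.filter fun w => ¬ G.adj v w ∧ w ≠ v

/-! ## GNN classifiers -/

/-- The kind of the layers of a GNN: aggregate-combine (`AC`),
aggregate-combine-readout (`ACR`), or extended aggregate-combine (`ACP`, i.e. `AC+`). -/
inductive GNNKind : Type
  | AC | ACR | ACP

/-- A GNN layer from dimension `din` to dimension `dout`: an aggregation function `agg`
(over neighbours), an auxiliary aggregation/readout function `aux` (fed the empty multiset in
`AC` layers, the multiset of all node labels in `ACR` layers, and the multiset of labels of
non-neighbours in `AC+` layers), and a combination function `comb`. -/
structure GNNLayer (din dout : ℕ) where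
  m₁ : ℕ
  m₂ : ℕ
  agg : Multiset (Fin din → ℝ) → Fin m₁ → ℝ
  aux : Multiset (Fin din → ℝ) → Fin m₂ → ℝ
  comb : (Fin din → ℝ) → (Fin m₁ → ℝ) → (Fin m₂ → ℝ) → Fin dout → ℝ

/-- A GNN classifier of dimension `d` with `L` layers of matching dimensions and a
classification function `cls`. -/
structure GNN (d : ℕ) where
  kind : GNNKind
  L : ℕ
  dims : ℕ → ℕ
  dims_zero : dims 0 = d
  layer : (ℓ : ℕ) → ℓ < L → GNNLayer (dims ℓ) (dims (ℓ + 1))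
  cls : (Fin (dims L) → ℝ) → Bool

/-- The set of nodes whose labels are fed to the second aggregation function `aux`. -/
def GNN.auxSet {d : ℕ} (N : GNN d) (G : LGraph d) (v : Fin G.n) : Finset (Fin G.n) :=
  match N.kind with
  | GNNKind.AC => ∅
  | GNNKind.ACR => Finset.univ
  | GNNKind.ACP => G.conbrs v

/-- The labelling of the nodes of `G` after `ℓ` layers of `N` have been applied. -/
def GNN.labelAt {d : ℕ} (N : GNN d) (G : LGraph d) : (ℓ : ℕ) → Fin G.n → Fin (N.dims ℓ) → ℝ
  | 0 => fun v i => if G.label v (Fin.cast N.dims_zero i) = true then 1 else 0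
  | ℓ + 1 => fun v =>
      if h : ℓ < N.L then
        (N.layer ℓ h).comb (N.labelAt G ℓ v)
          ((N.layer ℓ h).agg ((G.nbrs v).val.map fun w => N.labelAt G ℓ w))
          ((N.layer ℓ h).aux ((N.auxSet G v).val.map fun w => N.labelAt G ℓ w))
      else fun _ => 0

/-- The output of the GNN classifier `N` on the pointed graph `(G, v)`. -/
def GNN.eval {d : ℕ} (N : GNN d) (G : LGraph d) (v : Fin G.n) : Bool :=
  N.cls (N.labelAt G N.L v)

/-- The spectrum of `N` at layer `ℓ`: by convention, at layer `0` it is the set of Boolean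
vectors of the dimension of `N`; at layer `ℓ + 1` it is the set of vectors that can occur as
node labels upon application of layer `ℓ + 1` in applications of `N` to graphs. -/
def GNN.spec {d : ℕ} (N : GNN d) : (ℓ : ℕ) → Set (Fin (N.dims ℓ) → ℝ)
  | 0 => {x | ∀ i, x i = 0 ∨ x i = 1}
  | ℓ + 1 => {x | ∃ (G : LGraph d) (v : Fin G.n), N.labelAt G (ℓ + 1) v = x}

/-! ## Modal formulas (GMLC and its fragments GML, ML(E), ML) -/

inductive MForm (d : ℕ) : Type
  | prop : Fin d → MForm d
  | neg : MForm d → MForm d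
  | and : MForm d → MForm d → MForm d
  | dia : ℕ → MForm d → MForm d
  | glob : ℕ → MForm d → MForm d

namespace MForm

/-- Modal depth. -/
def depth {d : ℕ} : MForm d → ℕ
  | prop _ => 0
  | neg φ => depth φ
  | and φ ψ => max (depth φ) (depth ψ)
  | dia _ φ => depth φ + 1
  | glob _ φ => depth φ + 1

/-- Counting rank. -/
def rank {d : ℕ} : MForm d → ℕ
  | prop _ => 0
  | neg φ => rank φ
  | and φ ψ => max (rank φ) (rank ψ)
  | dia k φ => max k (rank φ)
  | glob k φ => max k (rank φ)

/-- Graded modal logic: no global modalities, grades are positive. -/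
def IsGML {d : ℕ} : MForm d → Prop
  | prop _ => True
  | neg φ => IsGML φ
  | and φ ψ => IsGML φ ∧ IsGML ψ
  | dia k φ => 1 ≤ k ∧ IsGML φ
  | glob _ _ => False

/-- Basic modal logic: no global modalities, all graded modalities are `◇₁`. -/
def IsML {d : ℕ} : MForm d → Prop
  | prop _ => True
  | neg φ => IsML φ
  | and φ ψ => IsML φ ∧ IsML ψ
  | dia k φ => k = 1 ∧ IsML φ
  | glob _ _ => False

/-- Graded modal logic with counting: grades are positive. -/
def IsGMLC {d : ℕ} : MForm d → Prop
  | prop _ => True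
  | neg φ => IsGMLC φ
  | and φ ψ => IsGMLC φ ∧ IsGMLC ψ
  | dia k φ => 1 ≤ k ∧ IsGMLC φ
  | glob k φ => 1 ≤ k ∧ IsGMLC φ

/-- Modal logic with the global modality: all modalities are `◇₁` or `∃₁`. -/
def IsMLE {d : ℕ} : MForm d → Prop
  | prop _ => True
  | neg φ => IsMLE φ
  | and φ ψ => IsMLE φ ∧ IsMLE ψ
  | dia k φ => k = 1 ∧ IsMLE φ
  | glob k φ => k = 1 ∧ IsMLE φ

/-- A tautology (needs a proposition to exist). -/
def top {d : ℕ} (hd : 0 < d) : MForm d :=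
  neg (and (prop ⟨0, hd⟩) (neg (prop ⟨0, hd⟩)))

/-- Conjunction of a list of formulas (the empty conjunction is a tautology). -/
def conjList {d : ℕ} (hd : 0 < d) : List (MForm d) → MForm d
  | [] => top hd
  | [φ] => φ
  | φ :: ψ :: rest => and φ (conjList hd (ψ :: rest))

end MForm

/-! ## Finite pointed Kripke models -/

structure KModel (d : ℕ) where
  W : Type
  fintype : Fintype W
  R : W → W → Prop
  symm : ∀ u v, R u v → R v u
  irrefl : ∀ v, ¬ R v v
  val : W → Fin d → Prop

/-- Satisfaction of modal formulas. -/
def KModel.sat {d : ℕ} (M : KModel d) : M.W → MForm d → Prop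
  | v, MForm.prop p => M.val v p
  | v, MForm.neg φ => ¬ M.sat v φ
  | v, MForm.and φ ψ => M.sat v φ ∧ M.sat v ψ
  | v, MForm.dia k φ => k ≤ Nat.card {w : M.W // M.R v w ∧ M.sat w φ}
  | v, MForm.glob k φ => k ≤ Nat.card {w : M.W // M.sat w φ}

/-- A list enumerating the worlds of a finite Kripke model. -/
def KModel.worldList {d : ℕ} (M : KModel d) : List M.W :=
  haveI := M.fintype
  Finset.univ.toList

/-- The Kripke model associated with a node-labelled graph. -/
def LGraph.toKModel {d : ℕ} (G : LGraph d) : KModel d where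
  W := Fin G.n
  fintype := inferInstance
  R := G.adj
  symm := G.symm
  irrefl := G.irrefl
  val := fun v p => G.label v p = true

/-! ## Graded bisimulation games -/

/-- `GBisim c ℓ M v M' v'` holds iff Duplicator has a winning strategy in the `ℓ`-round
`c`-graded bisimulation game starting from configuration `(M, v, M', v')`. -/
def GBisim {d : ℕ} (c : ℕ) : (ℓ : ℕ) → (M : KModel d) → M.W → (M' : KModel d) → M'.W → Prop
  | 0, M, v, M', v' => ∀ p, M.val v p ↔ M'.val v' p
  | ℓ + 1, M, v, M', v' =>
      (∀ p, M.val v p ↔ M'.val v' p) ∧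
      (∀ U₁ : Finset M.W, U₁.Nonempty → U₁.card ≤ c → (∀ u ∈ U₁, M.R v u) →
        ∃ U₂ : Finset M'.W, U₂.card = U₁.card ∧ (∀ u ∈ U₂, M'.R v' u) ∧
          ∀ u₂ ∈ U₂, ∃ u₁ ∈ U₁, GBisim c ℓ M u₁ M' u₂) ∧
      (∀ U₁ : Finset M'.W, U₁.Nonempty → U₁.card ≤ c → (∀ u ∈ U₁, M'.R v' u) →
        ∃ U₂ : Finset M.W, U₂.card = U₁.card ∧ (∀ u ∈ U₂, M.R v u) ∧
          ∀ u₂ ∈ U₂, ∃ u₁ ∈ U₁, GBisim c ℓ M u₂ M' u₁)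

/-- `GBisimG c ℓ M v M' v'` holds iff Duplicator has a winning strategy in the `ℓ`-round
`c`-graded *global* bisimulation game starting from configuration `(M, v, M', v')`:
Spoiler may additionally play global rounds, selecting worlds anywhere in one model. -/
def GBisimG {d : ℕ} (c : ℕ) : (ℓ : ℕ) → (M : KModel d) → M.W → (M' : KModel d) → M'.W → Prop
  | 0, M, v, M', v' => ∀ p, M.val v p ↔ M'.val v' p
  | ℓ + 1, M, v, M', v' =>
      (∀ p, M.val v p ↔ M'.val v' p) ∧
      (∀ U₁ : Finset M.W, U₁.Nonempty → U₁.card ≤ c → (∀ u ∈ U₁, M.R v u) →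
        ∃ U₂ : Finset M'.W, U₂.card = U₁.card ∧ (∀ u ∈ U₂, M'.R v' u) ∧
          ∀ u₂ ∈ U₂, ∃ u₁ ∈ U₁, GBisimG c ℓ M u₁ M' u₂) ∧
      (∀ U₁ : Finset M'.W, U₁.Nonempty → U₁.card ≤ c → (∀ u ∈ U₁, M'.R v' u) →
        ∃ U₂ : Finset M.W, U₂.card = U₁.card ∧ (∀ u ∈ U₂, M.R v u) ∧
          ∀ u₂ ∈ U₂, ∃ u₁ ∈ U₁, GBisimG c ℓ M u₂ M' u₁) ∧
      (∀ U₁ : Finset M.W, U₁.Nonempty → U₁.card ≤ c →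
        ∃ U₂ : Finset M'.W, U₂.card = U₁.card ∧
          ∀ u₂ ∈ U₂, ∃ u₁ ∈ U₁, GBisimG c ℓ M u₁ M' u₂) ∧
      (∀ U₁ : Finset M'.W, U₁.Nonempty → U₁.card ≤ c →
        ∃ U₂ : Finset M.W, U₂.card = U₁.card ∧
          ∀ u₂ ∈ U₂, ∃ u₁ ∈ U₁, GBisimG c ℓ M u₂ M' u₁)

/-! ## Characteristic formulas -/

/-- The conjunction of all propositions true at `v` and of the negations of all
propositions false at `v`. -/
def atomDesc {d : ℕ} (hd : 0 < d) (M : KModel d) (v : M.W) : MForm d :=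
  MForm.conjList hd ((List.finRange d).map fun p =>
    if M.val v p then MForm.prop p else MForm.neg (MForm.prop p))

/-- `|U^n_{v,w}|`: the number of neighbours `u` of `v` with `(M,u) ∼_{n,c} (M,w)`. -/
def USet {d : ℕ} (c n : ℕ) (M : KModel d) (v w : M.W) : ℕ :=
  Nat.card {u : M.W // M.R v u ∧ GBisim c n M u M w}

/-- The characteristic formula `φ^{ℓ,c}_{[M,v]}` of a finite pointed Kripke model for GML. -/
def charF {d : ℕ} (hd : 0 < d) (c : ℕ) (M : KModel d) : ℕ → M.W → MForm d
  | 0, v => atomDesc hd M v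
  | n + 1, v =>
      MForm.conjList hd
        ([atomDesc hd M v] ++
         ((M.worldList.filter fun w => decide (M.R v w)).flatMap fun w =>
            ((List.range c).map (· + 1)).filterMap fun k =>
              if k ≤ min (USet c n M v w) c then some (MForm.dia k (charF hd c M n w))
              else none) ++
         ((M.worldList.filter fun w => decide (M.R v w)).flatMap fun w =>
            ((List.range c).map (· + 1)).filterMap fun k =>
              if USet c n M v w < k ∧ k ≤ c then
                some (MForm.neg (MForm.dia k (charF hd c M n w)))
              else none) ++
         [MForm.neg (MForm.dia 1 (MForm.conjList hd
            ((M.worldList.filter fun w => decide (M.R v w)).map fun w =>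
              MForm.neg (charF hd c M n w))))])

/-- `|U^n_{v,w}|` for the global game. -/
def USetG {d : ℕ} (c n : ℕ) (M : KModel d) (v w : M.W) : ℕ :=
  Nat.card {u : M.W // M.R v u ∧ GBisimG c n M u M w}

/-- `|J^n_w|`: the number of worlds `u` with `(M,u) ∼^∃_{n,c} (M,w)`. -/
def JSetG {d : ℕ} (c n : ℕ) (M : KModel d) (w : M.W) : ℕ :=
  Nat.card {u : M.W // GBisimG c n M u M w}

/-- The global characteristic formula `φ^{ℓ,c}_{∃[M,v]}` for GMLC. -/
def charG {d : ℕ} (hd : 0 < d) (c : ℕ) (M : KModel d) : ℕ → M.W → MForm d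
  | 0, v => atomDesc hd M v
  | n + 1, v =>
      MForm.conjList hd
        ([atomDesc hd M v] ++
         ((M.worldList.filter fun w => decide (M.R v w)).flatMap fun w =>
            ((List.range c).map (· + 1)).filterMap fun k =>
              if k ≤ min (USetG c n M v w) c then some (MForm.dia k (charG hd c M n w))
              else none) ++
         ((M.worldList.filter fun w => decide (M.R v w)).flatMap fun w =>
            ((List.range c).map (· + 1)).filterMap fun k =>
              if USetG c n M v w < k ∧ k ≤ c then
                some (MForm.neg (MForm.dia k (charG hd c M n w)))
              else none) ++
         (M.worldList.flatMap fun w =>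
            ((List.range c).map (· + 1)).filterMap fun k =>
              if k ≤ min (JSetG c n M w) c then some (MForm.glob k (charG hd c M n w))
              else none) ++
         (M.worldList.flatMap fun w =>
            ((List.range c).map (· + 1)).filterMap fun k =>
              if JSetG c n M w < k ∧ k ≤ c then
                some (MForm.neg (MForm.glob k (charG hd c M n w)))
              else none) ++
         [MForm.neg (MForm.dia 1 (MForm.conjList hd
            ((M.worldList.filter fun w => decide (M.R v w)).map fun w =>
              MForm.neg (charG hd c M n w)))),
          MForm.neg (MForm.glob 1 (MForm.conjList hd
            (M.worldList.map fun w => MForm.neg (charG hd c M n w))))])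

/-! ## Two-variable first-order logic with counting quantifiers (C²) -/

/-- C² formulas over unary predicates `p₁, …, p_d` and one binary relation `E`, with the two
variables represented by `Bool` (`false` is the distinguished free variable `x`). -/
inductive C2Form (d : ℕ) : Type
  | prop : Fin d → Bool → C2Form d
  | edge : Bool → Bool → C2Form d
  | eq : Bool → Bool → C2Form d
  | neg : C2Form d → C2Form d
  | and : C2Form d → C2Form d → C2Form d
  | exC : ℕ → Bool → C2Form d → C2Form d

namespace C2Form

/-- Quantifier depth. -/
def depth {d : ℕ} : C2Form d → ℕ
  | prop _ _ => 0
  | edge _ _ => 0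
  | eq _ _ => 0
  | neg φ => depth φ
  | and φ ψ => max (depth φ) (depth ψ)
  | exC _ _ φ => depth φ + 1

/-- Counting rank. -/
def rank {d : ℕ} : C2Form d → ℕ
  | prop _ _ => 0
  | edge _ _ => 0
  | eq _ _ => 0
  | neg φ => rank φ
  | and φ ψ => max (rank φ) (rank ψ)
  | exC k _ φ => max k (rank φ)

/-- Well-formed C² formulas: all counting indices are positive. -/
def IsC2 {d : ℕ} : C2Form d → Prop
  | prop _ _ => True
  | edge _ _ => True
  | eq _ _ => True
  | neg φ => IsC2 φ
  | and φ ψ => IsC2 φ ∧ IsC2 ψ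
  | exC k _ φ => 1 ≤ k ∧ IsC2 φ

/-- FO² formulas: all counting quantifiers are with `k = 1`, i.e. ordinary `∃`. -/
def IsFO2 {d : ℕ} : C2Form d → Prop
  | prop _ _ => True
  | edge _ _ => True
  | eq _ _ => True
  | neg φ => IsFO2 φ
  | and φ ψ => IsFO2 φ ∧ IsFO2 ψ
  | exC k _ φ => k = 1 ∧ IsFO2 φ

/-- The set of free variables of a formula. -/
def free {d : ℕ} : C2Form d → Set Bool
  | prop _ b => {b}
  | edge b₁ b₂ => {b₁, b₂}
  | eq b₁ b₂ => {b₁, b₂}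
  | neg φ => free φ
  | and φ ψ => free φ ∪ free ψ
  | exC _ b φ => free φ \ {b}

end C2Form

/-- A finite first-order structure over the signature with unary predicates `p₁, …, p_d`
and one binary relation `E`. -/
structure FOModel (d : ℕ) where
  W : Type
  fintype : Fintype W
  E : W → W → Prop
  val : W → Fin d → Prop

/-- First-order satisfaction of C² formulas under an assignment of the two variables. -/
def FOModel.sat {d : ℕ} (M : FOModel d) : (Bool → M.W) → C2Form d → Prop
  | a, C2Form.prop p b => M.val (a b) p
  | a, C2Form.edge b₁ b₂ => M.E (a b₁) (a b₂)
  | a, C2Form.eq b₁ b₂ => a b₁ = a b₂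
  | a, C2Form.neg φ => ¬ M.sat a φ
  | a, C2Form.and φ ψ => M.sat a φ ∧ M.sat a ψ
  | a, C2Form.exC k b φ => k ≤ Nat.card {w : M.W // M.sat (Function.update a b w) φ}

/-- The first-order structure associated with a node-labelled graph. -/
def LGraph.toFOModel {d : ℕ} (G : LGraph d) : FOModel d where
  W := Fin G.n
  fintype := inferInstance
  E := G.adj
  val := fun v p => G.label v p = true

/-! ## Two-pebble graded games -/

/-- The positions of the pebbles (pair 1 placed, pair 2 possibly unplaced) form a partial
isomorphism between `M` and `M'`. -/
def PIso {d : ℕ} (M M' : FOModel d) (p₁ : M.W × M'.W) (p₂ : Option (M.W × M'.W)) : Prop :=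
  ((∀ q, M.val p₁.1 q ↔ M'.val p₁.2 q) ∧ (M.E p₁.1 p₁.1 ↔ M'.E p₁.2 p₁.2)) ∧
  ∀ x ∈ p₂,
    (∀ q, M.val x.1 q ↔ M'.val x.2 q) ∧ (M.E x.1 x.1 ↔ M'.E x.2 x.2) ∧
    (p₁.1 = x.1 ↔ p₁.2 = x.2) ∧
    (M.E p₁.1 x.1 ↔ M'.E p₁.2 x.2) ∧ (M.E x.1 p₁.1 ↔ M'.E x.2 p₁.2)

/-- Update the configuration by moving pebble pair `i` (`false` = pair 1, `true` = pair 2)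
to the given pair of worlds. -/
def updCfg {α β : Type*} (p₁ : α × β) (p₂ : Option (α × β)) :
    Bool → α × β → (α × β) × Option (α × β)
  | false, x => (x, p₂)
  | true, x => (p₁, some x)

/-- `PebbleWin c M M' ℓ p₁ p₂` holds iff Duplicator has a winning strategy in the 2-pebble
`ℓ`-round `c`-graded game from the configuration with pebble pair 1 on `p₁` and pebble pair 2
on `p₂` (if placed): she can ensure that the pebble positions always form a partial
isomorphism. -/
def PebbleWin {d : ℕ} (c : ℕ) (M M' : FOModel d) :
    (ℓ : ℕ) → M.W × M'.W → Option (M.W × M'.W) → Prop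
  | 0, p₁, p₂ => PIso M M' p₁ p₂
  | ℓ + 1, p₁, p₂ =>
      PIso M M' p₁ p₂ ∧
      ∀ i : Bool,
        (∀ U : Finset M.W, U.Nonempty → U.card ≤ c →
          ∃ U' : Finset M'.W, U'.card = U.card ∧
            ∀ u' ∈ U', ∃ u ∈ U,
              PebbleWin c M M' ℓ (updCfg p₁ p₂ i (u, u')).1 (updCfg p₁ p₂ i (u, u')).2) ∧
        (∀ U : Finset M'.W, U.Nonempty → U.card ≤ c →
          ∃ U' : Finset M.W, U'.card = U.card ∧
            ∀ u ∈ U', ∃ u' ∈ U,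
              PebbleWin c M M' ℓ (updCfg p₁ p₂ i (u, u')).1 (updCfg p₁ p₂ i (u, u')).2)

end
/-! ### Capped multisets -/

section Cap

variable {α : Type*}

theorem count_capAt (k : ℕ) (M : Multiset α) (a : α) :
    (M.capAt k).count a = min (M.count a) k := by
  unfold Multiset.capAt
  rw [Multiset.count_bind]
  simp only [Multiset.count_replicate]
  change ∑ b ∈ _, _ = _
  rw [Finset.sum_ite_eq']
  split_ifs with h
  · congr!
  · have : a ∉ M := by simpa using h
    simp [Multiset.count_eq_zero_of_notMem this]

theorem kBounded_comp_capAt {β : Type*} (k : ℕ) (g : Multiset α → β) :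
    KBounded k fun M => g (M.capAt k) := by
  intro M
  have : (M.capAt k).capAt k = M.capAt k := by
    ext a
    simp [count_capAt]
  simp only [this]

/-- Capping at `k` does not change which numbers `j ≤ k` are at most the number of elements
satisfying a given predicate. -/
theorem le_countP_capAt {k j : ℕ} (hj : j ≤ k) (P : α → Prop) (M : Multiset α) :
    j ≤ (M.capAt k).countP P ↔ j ≤ M.countP P := by
  have hle : M.capAt k ≤ M := by
    rw [Multiset.le_iff_count]
    intro a
    simp [count_capAt]
  refine ⟨fun h => h.trans (Multiset.countP_le_of_le P hle), fun h => ?_⟩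
  by_cases hbig : ∃ a, P a ∧ k ≤ M.count a
  · -- a single heavily repeated element already contributes `k`
    obtain ⟨a, ha, hk⟩ := hbig
    have h1 : (M.capAt k).count a ≤ (M.capAt k).countP P := by
      rw [Multiset.countP_eq_card_filter]
      calc (M.capAt k).count a = ((M.capAt k).filter P).count a := by
            rw [Multiset.count_filter_of_pos ha]
        _ ≤ _ := Multiset.count_le_card _ _
    rw [count_capAt, min_eq_right hk] at h1
    exact hj.trans h1
  · push Not at hbig
    have : (M.capAt k).filter P = M.filter P := by
      ext a
      rw [Multiset.count_filter, Multiset.count_filter]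
      split_ifs with ha
      · rw [count_capAt, min_eq_left (hbig a ha).le]
      · rfl
    rwa [Multiset.countP_eq_card_filter, this, ← Multiset.countP_eq_card_filter]

end Cap

theorem countP_map_val {α ι : Type*} (s : Finset ι) (f : ι → α) (P : α → Prop) :
    (s.val.map f).countP P = (s.filter fun w => P (f w)).card := by
  rw [Multiset.countP_map]
  rfl

/-! ### Counting semantics of the modalities -/

theorem natCard_subtype_and {n : ℕ} (R P : Fin n → Prop) :
    Nat.card {w : Fin n // R w ∧ P w} = ((Finset.univ.filter R).filter P).card := by
  rw [Nat.card_eq_fintype_card, Fintype.card_subtype, Finset.filter_filter]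

theorem natCard_subtype {n : ℕ} (P : Fin n → Prop) :
    Nat.card {w : Fin n // P w} = ((Finset.univ : Finset (Fin n)).filter P).card := by
  rw [Nat.card_eq_fintype_card, Fintype.card_subtype]

theorem sat_dia {d : ℕ} (G : LGraph d) (v : Fin G.n) (k : ℕ) (φ : MForm d) :
    G.toKModel.sat v (MForm.dia k φ) ↔
      k ≤ ((G.nbrs v).filter fun w : Fin G.n => G.toKModel.sat w φ).card :=
  iff_of_eq (congrArg (k ≤ ·)
    (natCard_subtype_and (G.adj v) fun w : Fin G.n => G.toKModel.sat w φ))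

theorem sat_glob {d : ℕ} (G : LGraph d) (v : Fin G.n) (k : ℕ) (φ : MForm d) :
    G.toKModel.sat v (MForm.glob k φ) ↔
      k ≤ ((Finset.univ : Finset (Fin G.n)).filter fun w => G.toKModel.sat w φ).card :=
  iff_of_eq (congrArg (k ≤ ·) (natCard_subtype fun w : Fin G.n => G.toKModel.sat w φ))

/-! ### From formulas to networks -/

section Universal

open Cardinal

theorem mk_vec_le (n : ℕ) : #(Fin n → ℝ) ≤ 𝔠 := by
  rw [← Cardinal.power_def, Cardinal.mk_real]
  calc 𝔠 ^ #(Fin n) ≤ 𝔠 ^ ℵ₀ :=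
        Cardinal.power_le_power_left Cardinal.continuum_ne_zero
          (by simp [Cardinal.natCast_le_aleph0])
    _ = 𝔠 := Cardinal.continuum_power_aleph0

theorem exists_multiset_code (n : ℕ) :
    ∃ f : Multiset (Fin n → ℝ) → ℝ, Function.Injective f := by
  have h1 : #(Multiset (Fin n → ℝ)) ≤ #(List (Fin n → ℝ)) :=
    Cardinal.mk_le_of_surjective (f := fun l : List (Fin n → ℝ) => (l : Multiset (Fin n → ℝ)))
      Quot.mk_surjective
  have h2 : #(Multiset (Fin n → ℝ)) ≤ #ℝ := by
    rw [Cardinal.mk_real]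
    exact h1.trans ((Cardinal.mk_list_le_max _).trans
      (max_le Cardinal.aleph0_le_continuum (mk_vec_le n)))
  obtain ⟨e⟩ := h2
  exact ⟨e, e.injective⟩

theorem exists_triple_code (n : ℕ) :
    ∃ f : (Fin n → ℝ) × ℝ × ℝ → ℝ, Function.Injective f := by
  have h2 : #((Fin n → ℝ) × ℝ × ℝ) ≤ #ℝ := by
    rw [Cardinal.mk_prod, Cardinal.mk_prod]
    simp only [Cardinal.lift_id, Cardinal.mk_real, Cardinal.continuum_mul_self]
    calc #(Fin n → ℝ) * 𝔠 ≤ 𝔠 * 𝔠 := mul_le_mul' (mk_vec_le n) le_rfl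
      _ = 𝔠 := Cardinal.continuum_mul_self
  obtain ⟨e⟩ := h2
  exact ⟨e, e.injective⟩

end Universal

/-- An injective real code for finite multisets of real vectors. -/
noncomputable def multisetCode (n : ℕ) : Multiset (Fin n → ℝ) → ℝ :=
  (exists_multiset_code n).choose

/-- An injective real code for a real vector together with two reals. -/
noncomputable def tripleCode (n : ℕ) : (Fin n → ℝ) × ℝ × ℝ → ℝ :=
  (exists_triple_code n).choose

theorem multisetCode_injective (n : ℕ) : Function.Injective (multisetCode n) :=
  (exists_multiset_code n).choose_spec

theorem tripleCode_injective (n : ℕ) : Function.Injective (tripleCode n) :=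
  (exists_triple_code n).choose_spec

/-- The dimensions of the refinement network: `d` at the input, `1` after every layer. -/
def refDims (d : ℕ) : ℕ → ℕ
  | 0 => d
  | _ + 1 => 1

/-- The layer of the refinement network: it injectively encodes the old label together with the
multisets of neighbour labels and of all labels, with multiplicities capped at `k`. -/
noncomputable def refLayer (k n : ℕ) : GNNLayer n 1 where
  m₁ := 1
  m₂ := 1
  agg := fun M _ => multisetCode n (M.capAt k)
  aux := fun M _ => multisetCode n (M.capAt k)
  comb := fun x a b _ => tripleCode n (x, a 0, b 0)

/-- The refinement network: `L` rounds of `k`-capped colour refinement with readout, followed by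
the classification function `cls`. -/
noncomputable def refGNN (d k L : ℕ) (cls : (Fin (refDims d L) → ℝ) → Bool) : GNN d where
  kind := GNNKind.ACR
  L := L
  dims := refDims d
  dims_zero := rfl
  layer := fun ℓ _ => refLayer k (refDims d ℓ)
  cls := cls

section Refinement

variable {d k L : ℕ} {cls : (Fin (refDims d L) → ℝ) → Bool}

theorem refGNN_labelAt_succ (G : LGraph d) (v : Fin G.n) {ℓ : ℕ} (h : ℓ < L) :
    (refGNN d k L cls).labelAt G (ℓ + 1) v = fun _ =>
      tripleCode (refDims d ℓ) ((refGNN d k L cls).labelAt G ℓ v,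
        multisetCode (refDims d ℓ)
          (((G.nbrs v).val.map fun w => (refGNN d k L cls).labelAt G ℓ w).capAt k),
        multisetCode (refDims d ℓ)
          (((Finset.univ : Finset (Fin G.n)).val.map
            fun w => (refGNN d k L cls).labelAt G ℓ w).capAt k)) := by
  conv_lhs => unfold GNN.labelAt
  rw [dif_pos (show ℓ < (refGNN d k L cls).L from h)]
  rfl

/-- One round of refinement loses no information. -/
theorem refGNN_labelAt_succ_inj {G G' : LGraph d} {v : Fin G.n} {v' : Fin G'.n} {ℓ : ℕ}
    (h : ℓ < L)
    (heq : (refGNN d k L cls).labelAt G (ℓ + 1) v = (refGNN d k L cls).labelAt G' (ℓ + 1) v') :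
    (refGNN d k L cls).labelAt G ℓ v = (refGNN d k L cls).labelAt G' ℓ v' ∧
    ((G.nbrs v).val.map fun w => (refGNN d k L cls).labelAt G ℓ w).capAt k =
      ((G'.nbrs v').val.map fun w => (refGNN d k L cls).labelAt G' ℓ w).capAt k ∧
    ((Finset.univ : Finset (Fin G.n)).val.map
        fun w => (refGNN d k L cls).labelAt G ℓ w).capAt k =
      ((Finset.univ : Finset (Fin G'.n)).val.map
        fun w => (refGNN d k L cls).labelAt G' ℓ w).capAt k := by
  rw [refGNN_labelAt_succ G v h, refGNN_labelAt_succ G' v' h] at heq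
  have h1 := tripleCode_injective _ (congrFun heq (0 : Fin 1))
  have h2 := congrArg Prod.snd h1
  exact ⟨congrArg Prod.fst h1, multisetCode_injective _ (congrArg Prod.fst h2),
    multisetCode_injective _ (congrArg Prod.snd h2)⟩

theorem refGNN_label_eq {G G' : LGraph d} {v : Fin G.n} {v' : Fin G'.n} {ℓ : ℕ} (h : ℓ ≤ L)
    (heq : (refGNN d k L cls).labelAt G ℓ v = (refGNN d k L cls).labelAt G' ℓ v') :
    G.label v = G'.label v' := by
  induction ℓ with
  | zero =>
    funext i
    have h1 := congrFun heq i
    simp only [GNN.labelAt] at h1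
    change (if G.label v i = true then (1 : ℝ) else 0) =
      (if G'.label v' i = true then (1 : ℝ) else 0) at h1
    cases hG : G.label v i <;> cases hG' : G'.label v' i <;> simp_all
  | succ ℓ ih => exact ih (by omega) (refGNN_labelAt_succ_inj (by omega) heq).1

/-- If a property of nodes depends only on a label, then equality of the `k`-capped multisets of
labels transfers counting of that property up to `k`. -/
theorem le_card_filter_iff_of_capAt_eq {α : Type*} {d j k : ℕ} (hj : j ≤ k)
    (f : (G : LGraph d) → Fin G.n → α) (P : (G : LGraph d) → Fin G.n → Prop)
    (hP : ∀ (G G' : LGraph d) (v : Fin G.n) (v' : Fin G'.n), f G v = f G' v' → (P G v ↔ P G' v'))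
    {G G' : LGraph d} (s : Finset (Fin G.n)) (s' : Finset (Fin G'.n))
    (heq : (s.val.map (f G)).capAt k = (s'.val.map (f G')).capAt k) :
    j ≤ (s.filter (P G)).card ↔ j ≤ (s'.filter (P G')).card := by
  let Q : α → Prop := fun x => ∃ (H : LGraph d) (w : Fin H.n), f H w = x ∧ P H w
  have hQ : ∀ (H : LGraph d) (w : Fin H.n), Q (f H w) ↔ P H w := by
    intro H w
    constructor
    · rintro ⟨H', w', he, hw⟩
      exact (hP _ _ _ _ he).1 hw
    · exact fun hw => ⟨H, w, rfl, hw⟩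
  have key : ∀ (H : LGraph d) (t : Finset (Fin H.n)),
      j ≤ ((t.val.map (f H)).capAt k).countP Q ↔ j ≤ (t.filter (P H)).card := by
    intro H t
    rw [le_countP_capAt hj, countP_map_val]
    simp only [hQ]
  rw [← key G s, ← key G' s', heq]

/-- After `ℓ` rounds, labels determine the truth of all formulas of depth at most `ℓ` and counting
rank at most `k`. -/
theorem refGNN_sat_iff (φ : MForm d) (hr : φ.rank ≤ k) :
    ∀ (ℓ : ℕ), φ.depth ≤ ℓ → ℓ ≤ L → ∀ (G G' : LGraph d) (v : Fin G.n) (v' : Fin G'.n),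
      (refGNN d k L cls).labelAt G ℓ v = (refGNN d k L cls).labelAt G' ℓ v' →
      (G.toKModel.sat v φ ↔ G'.toKModel.sat v' φ) := by
  induction φ with
  | prop p =>
    intro ℓ _ hL G G' v v' heq
    have := congrFun (refGNN_label_eq hL heq) p
    change G.label v p = true ↔ G'.label v' p = true
    rw [this]
  | neg φ ih =>
    intro ℓ hd hL G G' v v' heq
    exact not_congr (ih hr ℓ hd hL G G' v v' heq)
  | and φ ψ ih1 ih2 =>
    intro ℓ hd hL G G' v v' heq
    exact and_congr (ih1 ((le_max_left _ _).trans hr) ℓ ((le_max_left _ _).trans hd) hL _ _ _ _ heq)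
      (ih2 ((le_max_right _ _).trans hr) ℓ ((le_max_right _ _).trans hd) hL _ _ _ _ heq)
  | dia j φ ih =>
    intro ℓ hd hL G G' v v' heq
    cases ℓ with
    | zero => simp [MForm.depth] at hd
    | succ ℓ =>
      rw [sat_dia, sat_dia]
      exact le_card_filter_iff_of_capAt_eq ((le_max_left _ _).trans hr)
        (fun H w => (refGNN d k L cls).labelAt H ℓ w) (fun H w => H.toKModel.sat w φ)
        (ih ((le_max_right _ _).trans hr) ℓ (by simpa [MForm.depth] using hd) (by omega)) _ _
        (refGNN_labelAt_succ_inj (by omega) heq).2.1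
  | glob j φ ih =>
    intro ℓ hd hL G G' v v' heq
    cases ℓ with
    | zero => simp [MForm.depth] at hd
    | succ ℓ =>
      rw [sat_glob, sat_glob]
      exact le_card_filter_iff_of_capAt_eq ((le_max_left _ _).trans hr)
        (fun H w => (refGNN d k L cls).labelAt H ℓ w) (fun H w => H.toKModel.sat w φ)
        (ih ((le_max_right _ _).trans hr) ℓ (by simpa [MForm.depth] using hd) (by omega)) _ _
        (refGNN_labelAt_succ_inj (by omega) heq).2.2

end Refinement

theorem refGNN_labelAt_cls {d k L : ℕ} (cls cls' : (Fin (refDims d L) → ℝ) → Bool)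
    (G : LGraph d) (ℓ : ℕ) :
    (refGNN d k L cls).labelAt G ℓ = (refGNN d k L cls').labelAt G ℓ := by
  induction ℓ with
  | zero => rfl
  | succ ℓ ih =>
    funext v
    by_cases h : ℓ < L
    · rw [refGNN_labelAt_succ G v h, refGNN_labelAt_succ G v h, ih]
      rfl
    · conv_lhs => unfold GNN.labelAt
      conv_rhs => unfold GNN.labelAt
      rw [dif_neg (show ¬ ℓ < (refGNN d k L cls).L from h),
        dif_neg (show ¬ ℓ < (refGNN d k L cls').L from h)]
      rfl

theorem exists_gnn_of_rank_le {d : ℕ} (k : ℕ) (φ : MForm d) (hr : φ.rank ≤ k) :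
    ∃ N : GNN d, N.kind = GNNKind.ACR ∧
      (∀ (ℓ : ℕ) (h : ℓ < N.L),
        KBounded k (N.layer ℓ h).agg ∧ KBounded k (N.layer ℓ h).aux) ∧
      ∀ (G : LGraph d) (v : Fin G.n),
        N.eval G v = true ↔ (LGraph.toKModel G).sat v φ := by
  -- accept the labels realised by some pointed graph satisfying `φ`; labels do not depend on `cls`
  let N₀ := refGNN d k φ.depth (fun _ => true)
  let C : (Fin (refDims d φ.depth) → ℝ) → Bool := fun x =>
    decide (∃ (G : LGraph d) (v : Fin G.n), N₀.labelAt G φ.depth v = x ∧ G.toKModel.sat v φ)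
  refine ⟨refGNN d k φ.depth C, rfl, ?_, ?_⟩
  · intro ℓ _
    exact ⟨kBounded_comp_capAt k fun M _ => multisetCode _ M,
      kBounded_comp_capAt k fun M _ => multisetCode _ M⟩
  · intro G v
    change decide (∃ (G' : LGraph d) (v' : Fin G'.n), N₀.labelAt G' φ.depth v' =
      (refGNN d k φ.depth C).labelAt G φ.depth v ∧ G'.toKModel.sat v' φ) = true ↔ _
    rw [decide_eq_true_iff, refGNN_labelAt_cls C fun _ => true]
    constructor
    · rintro ⟨G', v', he, hs⟩
      exact (refGNN_sat_iff φ hr _ le_rfl le_rfl _ _ _ _ he).1 hs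
    · exact fun hs => ⟨G, v, rfl, hs⟩

theorem MForm.IsMLE.rank_le {d : ℕ} {φ : MForm d} (h : φ.IsMLE) : φ.rank ≤ 1 := by
  induction φ with
  | prop => simp [MForm.rank]
  | neg φ ih => exact ih h
  | and φ ψ ih1 ih2 => exact max_le (ih1 h.1) (ih2 h.2)
  | dia j φ ih => exact max_le h.1.le (ih h.2)
  | glob j φ ih => exact max_le h.1.le (ih h.2)

/-! ### From networks to formulas -/

/-- All grades occurring in the formula satisfy `A`. -/
def MForm.Grades {d : ℕ} (A : ℕ → Prop) : MForm d → Prop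
  | prop _ => True
  | neg φ => Grades A φ
  | and φ ψ => Grades A φ ∧ Grades A ψ
  | dia k φ => A k ∧ Grades A φ
  | glob k φ => A k ∧ Grades A φ

theorem MForm.Grades.isGMLC {d : ℕ} {φ : MForm d} (h : φ.Grades fun j => 1 ≤ j) : φ.IsGMLC := by
  induction φ with
  | prop => trivial
  | neg φ ih => exact ih h
  | and φ ψ ih1 ih2 => exact ⟨ih1 h.1, ih2 h.2⟩
  | dia j φ ih => exact ⟨h.1, ih h.2⟩
  | glob j φ ih => exact ⟨h.1, ih h.2⟩

theorem MForm.Grades.isMLE {d : ℕ} {φ : MForm d} (h : φ.Grades fun j => j = 1) : φ.IsMLE := by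
  induction φ with
  | prop => trivial
  | neg φ ih => exact ih h
  | and φ ψ ih1 ih2 => exact ⟨ih1 h.1, ih2 h.2⟩
  | dia j φ ih => exact ⟨h.1, ih h.2⟩
  | glob j φ ih => exact ⟨h.1, ih h.2⟩

/-- A property of pointed graphs is definable if some formula with all grades in `A`
expresses it. -/
def DefinableIn {d : ℕ} (A : ℕ → Prop) (P : (G : LGraph d) → Fin G.n → Prop) : Prop :=
  ∃ φ : MForm d, φ.Grades A ∧ ∀ (G : LGraph d) (v : Fin G.n), P G v ↔ G.toKModel.sat v φ

/-- A map on pointed graphs is finitely definable if it takes finitely many values and all its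
fibres are definable. -/
def FinDef {d : ℕ} (A : ℕ → Prop) {α : Type} (f : (G : LGraph d) → Fin G.n → α) : Prop :=
  (∃ S : Finset α, ∀ G v, f G v ∈ S) ∧ ∀ x, DefinableIn A fun G v => f G v = x

section Definability

variable {d : ℕ} {A : ℕ → Prop}

theorem DefinableIn.congr {P Q : (G : LGraph d) → Fin G.n → Prop} (h : DefinableIn A P)
    (hPQ : ∀ G v, Q G v ↔ P G v) : DefinableIn A Q := by
  obtain ⟨φ, hφ, h⟩ := h
  exact ⟨φ, hφ, fun G v => (hPQ G v).trans (h G v)⟩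

theorem DefinableIn.not {P : (G : LGraph d) → Fin G.n → Prop} (h : DefinableIn A P) :
    DefinableIn A fun G v => ¬ P G v := by
  obtain ⟨φ, hφ, h⟩ := h
  exact ⟨φ.neg, hφ, fun G v => not_congr (h G v)⟩

theorem DefinableIn.and {P Q : (G : LGraph d) → Fin G.n → Prop} (h : DefinableIn A P)
    (h' : DefinableIn A Q) : DefinableIn A fun G v => P G v ∧ Q G v := by
  obtain ⟨φ, hφ, h⟩ := h
  obtain ⟨ψ, hψ, h'⟩ := h'
  exact ⟨φ.and ψ, ⟨hφ, hψ⟩, fun G v => and_congr (h G v) (h' G v)⟩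

/-- The language has no propositional constant, so this needs a proposition to exist. -/
theorem definable_const (hd : 0 < d) (p : Prop) :
    DefinableIn A fun (G : LGraph d) (_ : Fin G.n) => p := by
  have h : DefinableIn A fun (G : LGraph d) (v : Fin G.n) => G.label v ⟨0, hd⟩ = true :=
    ⟨MForm.prop ⟨0, hd⟩, trivial, fun G v => Iff.rfl⟩
  by_cases hp : p
  · exact (h.and h.not).not.congr fun G v => by simp [hp]
  · exact (h.and h.not).congr fun G v => by simp [hp]

theorem definable_forall_mem (hd : 0 < d) {ι : Type} (S : Finset ι)
    (P : ι → (G : LGraph d) → Fin G.n → Prop) (h : ∀ i ∈ S, DefinableIn A (P i)) :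
    DefinableIn A fun G v => ∀ i ∈ S, P i G v := by
  induction S using Finset.induction_on with
  | empty => exact (definable_const hd True).congr fun G v => by simp
  | insert a S _ ih =>
    refine ((h a (by simp)).and (ih fun i hi => h i (by simp [hi]))).congr fun G v => ?_
    simp

theorem definable_exists_mem (hd : 0 < d) {ι : Type} (S : Finset ι)
    (P : ι → (G : LGraph d) → Fin G.n → Prop) (h : ∀ i ∈ S, DefinableIn A (P i)) :
    DefinableIn A fun G v => ∃ i ∈ S, P i G v :=
  (definable_forall_mem hd S (fun i G v => ¬ P i G v) fun i hi => (h i hi).not).not.congr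
    fun G v => by simp

theorem FinDef.definable (hd : 0 < d) {α : Type} {f : (G : LGraph d) → Fin G.n → α}
    (hf : FinDef A f) (P : α → Prop) : DefinableIn A fun G v => P (f G v) := by
  obtain ⟨⟨S, hS⟩, h⟩ := hf
  refine (definable_exists_mem hd (S.filter P) (fun x G v => f G v = x)
    fun x _ => h x).congr fun G v => ?_
  constructor
  · exact fun hp => ⟨_, Finset.mem_filter.2 ⟨hS G v, hp⟩, rfl⟩
  · rintro ⟨x, hx, rfl⟩
    exact (Finset.mem_filter.1 hx).2

theorem FinDef.comp (hd : 0 < d) {α β : Type} {f : (G : LGraph d) → Fin G.n → α}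
    (hf : FinDef A f) (g : α → β) : FinDef A fun G v => g (f G v) := by
  refine ⟨?_, fun x => hf.definable hd fun y => g y = x⟩
  obtain ⟨⟨S, hS⟩, -⟩ := hf
  exact ⟨S.image g, fun G v => Finset.mem_image_of_mem g (hS G v)⟩

theorem FinDef.prod {α β : Type} {f : (G : LGraph d) → Fin G.n → α}
    {g : (G : LGraph d) → Fin G.n → β} (hf : FinDef A f) (hg : FinDef A g) :
    FinDef A fun G v => (f G v, g G v) := by
  obtain ⟨⟨S, hS⟩, hf⟩ := hf
  obtain ⟨⟨T, hT⟩, hg⟩ := hg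
  exact ⟨⟨S ×ˢ T, fun G v => Finset.mk_mem_product (hS G v) (hT G v)⟩,
    fun x => ((hf x.1).and (hg x.2)).congr fun G v => Prod.ext_iff⟩

theorem FinDef.pi (hd : 0 < d) {ι α : Type} [Fintype ι]
    {f : ι → (G : LGraph d) → Fin G.n → α} (hf : ∀ i, FinDef A (f i)) :
    FinDef A fun G v i => f i G v := by
  choose S hS using fun i => (hf i).1
  refine ⟨⟨Fintype.piFinset S, fun G v => Fintype.mem_piFinset.2 fun i => hS i G v⟩, fun x => ?_⟩
  exact (definable_forall_mem hd Finset.univ (fun i G v => f i G v = x i)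
    fun i _ => (hf i).2 (x i)).congr fun G v => by simp [funext_iff]

theorem finDef_of_le {k : ℕ} (hd : 0 < d) {c : (G : LGraph d) → Fin G.n → ℕ}
    (hk : ∀ G v, c G v ≤ k)
    (h : ∀ j, 1 ≤ j → j ≤ k → DefinableIn A fun G v => j ≤ c G v) : FinDef A c := by
  have h' : ∀ j, DefinableIn A fun G v => j ≤ c G v := by
    intro j
    rcases Nat.eq_zero_or_pos j with rfl | h0
    · exact (definable_const hd True).congr fun G v => by simp
    by_cases hj : j ≤ k
    · exact h j h0 hj
    · exact (definable_const hd False).congr fun G v => by have := hk G v; simp; omega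
  exact ⟨⟨Finset.range (k + 1), fun G v => by simpa [Nat.lt_succ_iff] using hk G v⟩,
    fun x => ((h' x).and (h' (x + 1)).not).congr fun G v => by omega⟩

/-- The `k`-capped multiset of values of a finitely definable map over the nodes `nb G v` is again
finitely definable, provided that properties of nodes in `nb G v` can be counted up to `k`. -/
theorem FinDef.capAt (hd : 0 < d) {α : Type} {f : (G : LGraph d) → Fin G.n → α}
    (hf : FinDef A f) {k : ℕ} (nb : (G : LGraph d) → Fin G.n → Finset (Fin G.n))
    (hnb : ∀ P : (G : LGraph d) → Fin G.n → Prop, DefinableIn A P → ∀ j, 1 ≤ j → j ≤ k →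
      DefinableIn A fun G v => j ≤ ((nb G v).filter (P G)).card) :
    FinDef A fun G v => ((nb G v).val.map (f G)).capAt k := by
  obtain ⟨⟨S, hS⟩, hfib⟩ := hf
  have hc : FinDef A fun (G : LGraph d) (v : Fin G.n) (x : S) =>
      min ((nb G v).filter fun w => f G w = x).card k := by
    refine FinDef.pi (f := fun (x : S) G v => min ((nb G v).filter fun w => f G w = x).card k)
      hd fun x => finDef_of_le (k := k) hd (fun G v => min_le_right _ _) fun j h1 hj => ?_
    exact (hnb _ (hfib x) j h1 hj).congr fun G v => by simp [hj]
  -- the capped multiset is recovered from its multiplicities at the finitely many possible values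
  have hrec : ∀ (G : LGraph d) (v : Fin G.n), ((nb G v).val.map (f G)).capAt k =
      ∑ x : S, Multiset.replicate (min ((nb G v).filter fun w => f G w = x).card k) (x : α) := by
    intro G v
    ext a
    have hcount : ((nb G v).val.map (f G)).count a =
        ((nb G v).filter fun w => f G w = a).card := by
      rw [Multiset.count_map]
      simp only [eq_comm (a := a)]
      rfl
    rw [count_capAt, hcount, Multiset.count_sum']
    simp only [Multiset.count_replicate]
    by_cases ha : a ∈ S
    · rw [Finset.sum_eq_single (⟨a, ha⟩ : S)]
      · simp
      · intro b _ hb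
        rw [if_neg fun h => hb (Subtype.ext h)]
      · simp
    · rw [Finset.sum_eq_zero]
      · have : ((nb G v).filter fun w => f G w = a) = ∅ :=
          Finset.filter_eq_empty_iff.2 fun w _ h => ha (h ▸ hS G w)
        simp [this]
      · intro b _
        rw [if_neg fun h => ha (by rw [← h]; exact b.2)]
  have := hc.comp hd fun c : S → ℕ => ∑ x : S, Multiset.replicate (c x) (x : α)
  simpa only [hrec] using this

/-- A network whose layers are bounded by numbers `k` such that all grades `1, …, k` are available
has finitely definable labels after each layer. -/
theorem finDef_labelAt (hd : 0 < d) (N : GNN d) (hN : N.kind = GNNKind.ACR)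
    (hb : ∀ (ℓ : ℕ) (h : ℓ < N.L),
      (∃ k, (∀ j, 1 ≤ j → j ≤ k → A j) ∧ KBounded k (N.layer ℓ h).agg) ∧
      (∃ k, (∀ j, 1 ≤ j → j ≤ k → A j) ∧ KBounded k (N.layer ℓ h).aux)) (ℓ : ℕ) :
    FinDef A fun G v => N.labelAt G ℓ v := by
  induction ℓ with
  | zero =>
    have : FinDef A fun (G : LGraph d) (v : Fin G.n) => G.label v :=
      ⟨⟨Finset.univ, fun G v => Finset.mem_univ _⟩, fun x =>
        (definable_forall_mem hd Finset.univ
          (fun p G v => (G.label v p = true) ↔ x p = true) fun p _ => by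
            have hp : DefinableIn A fun (G : LGraph d) (v : Fin G.n) => G.label v p = true :=
              ⟨MForm.prop p, trivial, fun G v => Iff.rfl⟩
            cases hx : x p
            · exact hp.not.congr fun G v => by simp
            · exact hp.congr fun G v => by simp).congr fun G v => by
          simp [funext_iff]⟩
    exact this.comp hd fun (x : Fin d → Bool) i =>
      if x (Fin.cast N.dims_zero i) = true then (1 : ℝ) else 0
  | succ ℓ ih =>
    by_cases h : ℓ < N.L
    · obtain ⟨⟨k, hk, hagg⟩, ⟨k', hk', haux⟩⟩ := hb ℓ h
      have h1 := ih.capAt hd (k := k) (fun G v => G.nbrs v) (by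
        rintro P ⟨φ, hφ, hP⟩ j h1 hj
        obtain rfl : P = fun G v => G.toKModel.sat v φ :=
          funext fun G => funext fun v => propext (hP G v)
        exact ⟨MForm.dia j φ, ⟨hk j h1 hj, hφ⟩, fun G v => (sat_dia G v j φ).symm⟩)
      have h2 := ih.capAt hd (k := k') (fun G v => Finset.univ) (by
        rintro P ⟨φ, hφ, hP⟩ j h1 hj
        obtain rfl : P = fun G v => G.toKModel.sat v φ :=
          funext fun G => funext fun v => propext (hP G v)
        exact ⟨MForm.glob j φ, ⟨hk' j h1 hj, hφ⟩, fun G v => (sat_glob G v j φ).symm⟩)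
      have h3 := (ih.prod (h1.prod h2)).comp hd fun t =>
        (N.layer ℓ h).comb t.1 ((N.layer ℓ h).agg t.2.1) ((N.layer ℓ h).aux t.2.2)
      convert h3 using 3 with G v
      conv_lhs => unfold GNN.labelAt
      rw [dif_pos h]
      have hs : N.auxSet G v = Finset.univ := by rw [GNN.auxSet, hN]
      rw [hagg, haux, hs]
    · have h0 : FinDef A fun (G : LGraph d) (_ : Fin G.n) =>
          (fun _ => 0 : Fin (N.dims (ℓ + 1)) → ℝ) :=
        ⟨⟨{fun _ => 0}, fun G v => by simp⟩, fun x => definable_const hd _⟩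
      convert h0 using 3 with G v
      unfold GNN.labelAt
      rw [dif_neg h]

theorem definable_eval (hd : 0 < d) (N : GNN d) (hN : N.kind = GNNKind.ACR)
    (hb : ∀ (ℓ : ℕ) (h : ℓ < N.L),
      (∃ k, (∀ j, 1 ≤ j → j ≤ k → A j) ∧ KBounded k (N.layer ℓ h).agg) ∧
      (∃ k, (∀ j, 1 ≤ j → j ≤ k → A j) ∧ KBounded k (N.layer ℓ h).aux)) :
    DefinableIn A fun G v => N.eval G v = true :=
  (finDef_labelAt hd N hN hb N.L).definable hd fun x => N.cls x = true

end Definability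

/-- `GMLC ≡ GNN_b^ACR` and `ML(E) ≡ GNN_s^ACR`: every GMLC (resp. ML(E))
logic classifier has an equivalent GNN classifier in `GNN_b^ACR` (resp. `GNN_s^ACR`), and
conversely every GNN classifier in `GNN_b^ACR` (resp. `GNN_s^ACR`) has an equivalent GMLC
(resp. ML(E)) logic classifier (for the converse directions the set of propositions must be
nonempty). -/
theorem gmlc_equiv_gnn_b_acr_and_mle_equiv_gnn_s_acr :
    ∀ d : ℕ,
      (∀ φ : MForm d, φ.IsGMLC →
        ∃ N : GNN d, N.kind = GNNKind.ACR ∧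
          (∀ (ℓ : ℕ) (h : ℓ < N.L),
            BoundedAgg (N.layer ℓ h).agg ∧ BoundedAgg (N.layer ℓ h).aux) ∧
          ∀ (G : LGraph d) (v : Fin G.n),
            N.eval G v = true ↔ (LGraph.toKModel G).sat v φ) ∧
      (0 < d → ∀ N : GNN d, N.kind = GNNKind.ACR →
        (∀ (ℓ : ℕ) (h : ℓ < N.L),
          BoundedAgg (N.layer ℓ h).agg ∧ BoundedAgg (N.layer ℓ h).aux) →
        ∃ φ : MForm d, φ.IsGMLC ∧
          ∀ (G : LGraph d) (v : Fin G.n),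
            N.eval G v = true ↔ (LGraph.toKModel G).sat v φ) ∧
      (∀ φ : MForm d, φ.IsMLE →
        ∃ N : GNN d, N.kind = GNNKind.ACR ∧
          (∀ (ℓ : ℕ) (h : ℓ < N.L),
            KBounded 1 (N.layer ℓ h).agg ∧ KBounded 1 (N.layer ℓ h).aux) ∧
          ∀ (G : LGraph d) (v : Fin G.n),
            N.eval G v = true ↔ (LGraph.toKModel G).sat v φ) ∧
      (0 < d → ∀ N : GNN d, N.kind = GNNKind.ACR →
        (∀ (ℓ : ℕ) (h : ℓ < N.L),
          KBounded 1 (N.layer ℓ h).agg ∧ KBounded 1 (N.layer ℓ h).aux) →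
        ∃ φ : MForm d, φ.IsMLE ∧
          ∀ (G : LGraph d) (v : Fin G.n),
            N.eval G v = true ↔ (LGraph.toKModel G).sat v φ) := by
  intro d
  refine ⟨fun φ _ => ?_, fun hd N hN hb => ?_, fun φ hφ => ?_, fun hd N hN hb => ?_⟩
  · obtain ⟨N, h1, h2, h3⟩ := exists_gnn_of_rank_le φ.rank φ le_rfl
    exact ⟨N, h1, fun ℓ h => ⟨⟨_, (h2 ℓ h).1⟩, ⟨_, (h2 ℓ h).2⟩⟩, h3⟩
  · obtain ⟨φ, hφ, h⟩ := definable_eval (A := fun j => 1 ≤ j) hd N hN fun ℓ h => by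
      obtain ⟨⟨k, hk⟩, ⟨k', hk'⟩⟩ := hb ℓ h
      exact ⟨⟨k, fun j hj _ => hj, hk⟩, ⟨k', fun j hj _ => hj, hk'⟩⟩
    exact ⟨φ, hφ.isGMLC, h⟩
  · exact exists_gnn_of_rank_le 1 φ hφ.rank_le
  · obtain ⟨φ, hφ, h⟩ := definable_eval (A := fun j => j = 1) hd N hN fun ℓ h =>
      ⟨⟨1, fun j hj hj' => le_antisymm hj' hj, (hb ℓ h).1⟩,
        ⟨1, fun j hj hj' => le_antisymm hj' hj, (hb ℓ h).2⟩⟩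
    exact ⟨φ, hφ.isMLE, h⟩
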